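/- For all n ≥ 0 and all I, J ∈ P_n: the (I,J) entry of HM_n is nonzero if and only if J ⊆ I, and when J ⊆ I it equals (−2)^{|J|}. -/

import Mathlib

/-!
Unfolding the block recursion gives `H_n(I, K) = (-1)^{|I ∩ K|} = ∏_{k ∈ K} ε_k`, where `ε_k = -1`
if `k ∈ I` and `ε_k = 1` otherwise (`Hmat_apply`). Hence
`(H_n M_n)(I, J) = ∑_{K ⊆ J} (∏_{k ∈ K} ε_k) (-1)^{|J ∖ K|}`, which is the expansion of the product
`∏_{j ∈ J} (ε_j + (-1))`. Its factors are `-2` for `j ∈ I` and `0` for `j ∉ I`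
(`HM_apply_eq_prod`), and both claims can be read off.
-/

open Finset

/-- Restriction of a subset of `Fin (n+1)` to `Fin n` (forgetting the top element). -/
def resSet {n : ℕ} (I : Finset (Fin (n + 1))) : Finset (Fin n) :=
  Finset.univ.filter (fun j : Fin n => Fin.castSucc j ∈ I)

mutual
  /-- The matrix `A_n`, rows/columns indexed by subsets of `{1,…,n}` (element `j`
  of `[n]` corresponds to `j-1 : Fin n`, i.e. anti-lexicographic/binary order). -/
  def Amat : (n : ℕ) → Matrix (Finset (Fin n)) (Finset (Fin n)) ℤ
    | 0 => Matrix.of fun _ _ => 1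
    | n + 1 => Matrix.of fun I J =>
        if Fin.last n ∈ I then
          if Fin.last n ∈ J then - Bmat n (resSet I) (resSet J)
          else Amat n (resSet I) (resSet J)
        else Amat n (resSet I) (resSet J)
  /-- The matrix `B_n`. -/
  def Bmat : (n : ℕ) → Matrix (Finset (Fin n)) (Finset (Fin n)) ℤ
    | 0 => Matrix.of fun _ _ => 1
    | n + 1 => Matrix.of fun I J =>
        if Fin.last n ∈ I then
          if Fin.last n ∈ J then - Bmat n (resSet I) (resSet J)
          else 0
        else Amat n (resSet I) (resSet J)
end

/-- The Walsh-Hadamard matrix `H_n`. -/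
def Hmat : (n : ℕ) → Matrix (Finset (Fin n)) (Finset (Fin n)) ℤ
  | 0 => Matrix.of fun _ _ => 1
  | n + 1 => Matrix.of fun I J =>
      if Fin.last n ∈ I ∧ Fin.last n ∈ J then - Hmat n (resSet I) (resSet J)
      else Hmat n (resSet I) (resSet J)

/-- The Möbius matrix `M_n` of the boolean lattice. -/
def Mobmat (n : ℕ) : Matrix (Finset (Fin n)) (Finset (Fin n)) ℤ :=
  Matrix.of fun I J => if I ⊆ J then (-1) ^ (J \ I).card else 0

/-- The zeta matrix `Z_n` of the boolean lattice. -/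
def Zetamat (n : ℕ) : Matrix (Finset (Fin n)) (Finset (Fin n)) ℤ :=
  Matrix.of fun I J => if I ⊆ J then 1 else 0

/-- The subset of `[n] = {1,…,n}` corresponding to a subset of `Fin n`. -/
def natSet {n : ℕ} (I : Finset (Fin n)) : Finset ℕ := Finset.image (fun j : Fin n => (j : ℕ) + 1) I

/-- The ordinal number of a subset in the anti-lexicographic order. -/
def ordFin {n : ℕ} (I : Finset (Fin n)) : ℕ := ∑ j ∈ I, 2 ^ (j : ℕ)

/-- The run (maximal interval of consecutive integers) of `I` containing `j`
(empty if `j ∉ I`). -/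
def runOf (I : Finset ℕ) (j : ℕ) : Finset ℕ :=
  I.filter (fun i => ∀ k ∈ Finset.Icc (min i j) (max i j), k ∈ I)

/-- The set of runs (maximal intervals of consecutive integers) of `I`. -/
def runsOf (I : Finset ℕ) : Finset (Finset ℕ) := I.image (runOf I)

/-- `P` is a prefix of the interval `R`: it consists of an initial segment of `R`. -/
def IsPrefixOf (P R : Finset ℕ) : Prop :=
  P ⊆ R ∧ ∀ i ∈ R, ∀ j ∈ P, i ≤ j → i ∈ P


/-- Closed form of the Walsh-Hadamard matrix: the entry `(-1)^{|I ∩ J|}`, as a product over `J`. -/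
theorem Hmat_apply (n : ℕ) (I J : Finset (Fin n)) :
    Hmat n I J = ∏ j ∈ J, if j ∈ I then (-1 : ℤ) else 1 := by
  -- A product over all of `Fin n` lets `Fin.prod_univ_castSucc` split off the top element.
  have key : ∀ (n : ℕ) (I J : Finset (Fin n)),
      Hmat n I J = ∏ j : Fin n, if j ∈ I ∧ j ∈ J then (-1 : ℤ) else 1 := by
    intro n
    induction n with
    | zero => intro I J; simp [Hmat]
    | succ n ih =>
      intro I J
      rw [Fin.prod_univ_castSucc, Hmat]
      simp only [Matrix.of_apply, ih, resSet, mem_filter, mem_univ, true_and]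
      split_ifs <;> simp
  rw [key, ← Finset.prod_subset (Finset.subset_univ J)]
  · exact Finset.prod_congr rfl fun j hj => by simp [hj]
  · intro j _ hj
    simp [hj]

/-- The entries of `H_n M_n` factor over the elements of the column index. -/
theorem HM_apply_eq_prod (n : ℕ) (I J : Finset (Fin n)) :
    (Hmat n * Mobmat n) I J = ∏ j ∈ J, if j ∈ I then (-2 : ℤ) else 0 := by
  have h : ∀ j ∈ J, (if j ∈ I then (-2 : ℤ) else 0) = (if j ∈ I then (-1 : ℤ) else 1) + (-1) := by
    intro j _
    split_ifs <;> norm_num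
  rw [Finset.prod_congr rfl h, Finset.prod_add, Matrix.mul_apply,
    ← Finset.sum_subset (Finset.subset_univ J.powerset)]
  · refine Finset.sum_congr rfl fun K hK => ?_
    rw [Finset.mem_powerset] at hK
    simp [Hmat_apply, Mobmat, hK]
  · intro K _ hK
    rw [Finset.mem_powerset] at hK
    simp [Mobmat, hK]

/-- The `(I,J)` entry of `HM_n = H_n · M_n` is nonzero iff `J ⊆ I`,
in which case it equals `(−2)^{|J|}`. -/
theorem HM_entries (n : ℕ) (I J : Finset (Fin n)) :
    ((Hmat n * Mobmat n) I J ≠ 0 ↔ J ⊆ I) ∧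
    (J ⊆ I → (Hmat n * Mobmat n) I J = (-2) ^ J.card) := by
  rw [HM_apply_eq_prod]
  refine ⟨?_, fun h => ?_⟩
  · simp [Finset.prod_ne_zero_iff, Finset.subset_iff]
  · rw [Finset.prod_congr rfl fun j hj => if_pos (h hj), Finset.prod_const]
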